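/- Fix ε > 0 and, for each n, set k_n = log₂ log₂ n. Let 𝒢_n be the set of all x^n ∈ 𝒳^n for which there exist an integer l with 1 ≤ l ≤ k_n, an l-length block code C_l with at most 2^{l(R+ε)} codewords, and an integer s with 0 ≤ s < l, such that Σ_{a^l ∈ 𝒳^l} q_{l;s}(a^l | x^n) · d̄_l^{(j)}(a^l, C_l) ≤ Δ_j + 4Jε for every j ∈ {1,…,J}. Then for every stationary ergodic source 𝑿 for which (R, Δ_𝒥) is achievable, there exists N such that for all n ≥ N, P_{X^n}(𝒢_n^∁) ≤ ε, where 𝒢_n^∁ = 𝒳^n \ 𝒢_n. (Lemma 1) -/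

import Mathlib

open MeasureTheory Finset

/-- An `n`-length block code for the multiterminal system with one encoder and `J` decoders:
an encoder into a message set of size `M` and, for each `j`, a decoder using the `j`-th side
information. -/
structure BlockCode (J : ℕ) (𝒳 : Type) (𝒴 Zt : Fin J → Type) (n : ℕ) where
  M : ℕ
  M_pos : 0 < M
  enc : (Fin n → 𝒳) → Fin M
  dec : ∀ j : Fin J, Fin M → (Fin n → 𝒴 j) → (Fin n → Zt j)

section Defs

variable {J : ℕ} {𝒳 : Type} {𝒴 𝒵 Zt : Fin J → Type}
variable [Fintype 𝒳] [DecidableEq 𝒳]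
  [∀ j, Fintype (𝒴 j)] [∀ j, DecidableEq (𝒴 j)]
  [∀ j, Fintype (𝒵 j)] [∀ j, DecidableEq (𝒵 j)]
  [∀ j, Fintype (Zt j)]

/-- The memoryless `n`-th extension `W^n` of the transition probability `W`. -/
def Wn (W : 𝒳 → (∀ j, 𝒴 j) → (∀ j, 𝒵 j) → ℝ) {n : ℕ}
    (x : Fin n → 𝒳) (y : Fin n → ∀ j, 𝒴 j) (z : Fin n → ∀ j, 𝒵 j) : ℝ :=
  ∏ i, W (x i) (y i) (z i)

/-- The marginal `W_j^n` of `W^n` on the `j`-th side-information and target components. -/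
def Wjn (W : 𝒳 → (∀ j, 𝒴 j) → (∀ j, 𝒵 j) → ℝ) (j : Fin J) {n : ℕ}
    (x : Fin n → 𝒳) (yj : Fin n → 𝒴 j) (zj : Fin n → 𝒵 j) : ℝ :=
  ∑ y : Fin n → ∀ k, 𝒴 k, ∑ z : Fin n → ∀ k, 𝒵 k,
    if (∀ i, y i j = yj i ∧ z i j = zj i) then Wn W x y z else 0

/-- Per-block average distortion `d_n^{(j)}`. -/
noncomputable def dn (d1 : ∀ j, Zt j → 𝒵 j → ℝ) (j : Fin J) {n : ℕ}
    (zt : Fin n → Zt j) (z : Fin n → 𝒵 j) : ℝ :=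
  (∑ i, d1 j (zt i) (z i)) / n

/-- The conditional expected distortion `d̄_n^{(j)}(x^n, C_n)` given the source block `x^n`. -/
noncomputable def dbar (W : 𝒳 → (∀ j, 𝒴 j) → (∀ j, 𝒵 j) → ℝ)
    (d1 : ∀ j, Zt j → 𝒵 j → ℝ) {n : ℕ}
    (C : BlockCode J 𝒳 𝒴 Zt n) (j : Fin J) (x : Fin n → 𝒳) : ℝ :=
  ∑ yj : Fin n → 𝒴 j, ∑ zj : Fin n → 𝒵 j,
    Wjn W j x yj zj * dn d1 j (C.dec j (C.enc x) yj) zj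

variable [MeasurableSpace 𝒳]

/-- The expected distortion `E[d_n^{(j)}(ψ_n^{(j)}(φ_n(X^n), Y_j^n), Z_j^n)]` of a code, for the
source with law `μ` on `𝒳^ℕ`; `P_{X^n}(x^n)` is the measure of the corresponding cylinder set. -/
noncomputable def expDist (μ : Measure (ℕ → 𝒳))
    (W : 𝒳 → (∀ j, 𝒴 j) → (∀ j, 𝒵 j) → ℝ) (d1 : ∀ j, Zt j → 𝒵 j → ℝ) {n : ℕ}
    (C : BlockCode J 𝒳 𝒴 Zt n) (j : Fin J) : ℝ :=
  ∑ x : Fin n → 𝒳,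
    (μ {ω | ∀ i : Fin n, ω (i : ℕ) = x i}).toReal * dbar W d1 C j x

/-- `(R, Δ_𝒥)` is achievable for the source `μ`: for every `ε > 0` and all sufficiently large `n`
there is an `n`-length block code of rate at most `R + ε` whose expected distortion at every
decoder `j` is at most `Δ j + ε`. -/
def Achievable (μ : Measure (ℕ → 𝒳))
    (W : 𝒳 → (∀ j, 𝒴 j) → (∀ j, 𝒵 j) → ℝ) (d1 : ∀ j, Zt j → 𝒵 j → ℝ)
    (R : ℝ) (Δ : Fin J → ℝ) : Prop :=
  ∀ ε > (0 : ℝ), ∃ N : ℕ, ∀ n ≥ N, ∃ C : BlockCode J 𝒳 𝒴 Zt n,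
    Real.logb 2 C.M / n ≤ R + ε ∧ ∀ j, expDist μ W d1 C j ≤ Δ j + ε

end Defs

section Empirical

variable {𝒳 : Type} [Nonempty 𝒳] [DecidableEq 𝒳] [Fintype 𝒳]

/-- The length-`l` subblock of `x^n` starting at (0-based) position `start`,
i.e. `x_{start+1}^{start+l}` in 1-based notation (junk outside the range). -/
noncomputable def subblock {n : ℕ} (x : Fin n → 𝒳) (start l : ℕ) : Fin l → 𝒳 :=
  fun t => if h : start + (t : ℕ) < n then x ⟨start + t, h⟩ else Classical.arbitrary 𝒳

/-- The non-overlapping empirical distribution `q_{l;s}(a^l | x^n)`. -/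
noncomputable def qEmp {n : ℕ} (l s : ℕ) (x : Fin n → 𝒳) (a : Fin l → 𝒳) : ℝ :=
  (((Finset.range ((n - s) / l)).filter fun i => subblock x (i * l + s) l = a).card : ℝ) /
    (((n - s) / l : ℕ) : ℝ)

end Empirical

section Lemma1

variable {J : ℕ} {𝒳 : Type} {𝒴 𝒵 Zt : Fin J → Type}
variable [Fintype 𝒳] [DecidableEq 𝒳] [Nonempty 𝒳]
  [∀ j, Fintype (𝒴 j)] [∀ j, DecidableEq (𝒴 j)]
  [∀ j, Fintype (𝒵 j)] [∀ j, DecidableEq (𝒵 j)]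
  [∀ j, Fintype (Zt j)]

/-- The set `𝒢_n` of sequences `x^n`: there are `l` with `1 ≤ l ≤ k_n = log₂ log₂ n`, an
`l`-length block code with at most `2^{l(R+ε)}` codewords, and an offset `0 ≤ s < l` such that
`Σ_{a^l} q_{l;s}(a^l|x^n) d̄_l^{(j)}(a^l, C_l) ≤ Δ_j + 4Jε` for every `j`. -/
def GoodSet (W : 𝒳 → (∀ j, 𝒴 j) → (∀ j, 𝒵 j) → ℝ) (d1 : ∀ j, Zt j → 𝒵 j → ℝ)
    (R : ℝ) (Δ : Fin J → ℝ) (ε : ℝ) (n : ℕ) : Set (Fin n → 𝒳) :=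
  {x | ∃ l : ℕ, 1 ≤ l ∧ (l : ℝ) ≤ Real.logb 2 (Real.logb 2 n) ∧
    ∃ C : BlockCode J 𝒳 𝒴 Zt l, (C.M : ℝ) ≤ (2 : ℝ) ^ ((l : ℝ) * (R + ε)) ∧
    ∃ s < l, ∀ j, (∑ a : Fin l → 𝒳, qEmp l s x a * dbar W d1 C j a) ≤ Δ j + 4 * J * ε}


lemma aux_sum_range_mul {M : Type*} [AddCommMonoid M] (g : ℕ → M) (l N : ℕ) :
    ∑ b ∈ range (l * N), g b = ∑ r ∈ range l, ∑ i ∈ range N, g (r * N + i) := by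
  induction l with
  | zero => simp
  | succ l ih => rw [Nat.succ_mul, sum_range_add, ih, sum_range_succ]

lemma aux_hilbert {H : Type*} [NormedAddCommGroup H] [InnerProductSpace ℝ H] [CompleteSpace H]
    (U : H →L[ℝ] H) (hU : ‖U‖ ≤ 1) (f : H) (l : ℕ) (hl : 1 ≤ l) :
    ∃ h : H, U h = h ∧ Filter.Tendsto (fun N : ℕ => ((l * N : ℕ) : ℝ)⁻¹ •
      ∑ b ∈ range (l * N), (U ^ (b * l + b / N)) f) Filter.atTop (nhds h) := by
  have hUk : ∀ k : ℕ, ∀ x, ‖(U ^ k) x‖ ≤ ‖x‖ := by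
    intro k
    induction k with
    | zero => intro x; simp
    | succ k ih =>
      intro x
      rw [pow_succ]
      refine (ih _).trans ?_
      simpa using U.le_of_opNorm_le hU x
  set V := U ^ l with hV
  have hVn : ‖V‖ ≤ 1 := V.opNorm_le_bound zero_le_one (fun x => by rw [one_mul]; exact hUk l x)
  have hT := V.tendsto_birkhoffAverage_orthogonalProjection hVn f
  set p : H := ((V.eqLocus (1 : H →L[ℝ] H)).orthogonalProjectionOnto f : H) with hp
  have hpV : V p = p := by
    have : p ∈ V.eqLocus (1 : H →L[ℝ] H) := Submodule.coe_mem _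
    simpa using this
  have hpk : ∀ k, (V ^ k) p = p := by
    intro k
    induction k with
    | zero => simp
    | succ k ih => rw [pow_succ]; simp [hpV, ih]
  refine ⟨(l : ℝ)⁻¹ • ∑ r ∈ range l, (U ^ r) p, ?_, ?_⟩
  · rw [map_smul, map_sum]
    congr 1
    have h1 : ∀ r, U ((U ^ r) p) = (U ^ (r + 1)) p := by
      intro r; rw [pow_succ']; rfl
    simp only [h1]
    have := sum_range_succ (fun r => (U ^ r) p) l
    rw [sum_range_succ'] at this
    rw [← hV, hpV] at this
    simpa using this
  · have hA : ∀ r : ℕ, Filter.Tendsto (fun N : ℕ => (V ^ (r * N)) (birkhoffAverage ℝ V _root_.id N f))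
        Filter.atTop (nhds p) := by
      intro r
      rw [tendsto_iff_norm_sub_tendsto_zero] at hT ⊢
      refine squeeze_zero (fun _ => norm_nonneg _) (fun N => ?_) hT
      have : (V ^ (r * N)) (birkhoffAverage ℝ V _root_.id N f) - p
          = (V ^ (r * N)) (birkhoffAverage ℝ V _root_.id N f - p) := by
        rw [map_sub, hpk]
      rw [this, hV, ← pow_mul]
      exact hUk _ _
    have hB : Filter.Tendsto (fun N : ℕ => (l : ℝ)⁻¹ • ∑ r ∈ range l, (U ^ r)
        ((V ^ (r * N)) (birkhoffAverage ℝ V _root_.id N f))) Filter.atTop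
        (nhds ((l : ℝ)⁻¹ • ∑ r ∈ range l, (U ^ r) p)) := by
      refine Filter.Tendsto.const_smul (tendsto_finsetSum _ fun r _ => ?_) _
      exact ((U ^ r).continuous.tendsto p).comp (hA r)
    refine hB.congr' ?_
    filter_upwards [Filter.eventually_ge_atTop 1] with N hN
    rw [aux_sum_range_mul]
    rw [Nat.cast_mul, mul_inv, mul_smul, smul_sum (r := (N : ℝ)⁻¹)]
    congr 1
    refine sum_congr rfl fun r _ => ?_
    rw [birkhoffAverage, birkhoffSum, map_smul, map_smul, map_sum, map_sum]
    congr 1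
    refine sum_congr rfl fun i hi => ?_
    have hi := mem_range.1 hi
    have h2 : (r * N + i) / N = r := by
      rw [mul_comm, Nat.mul_add_div (by omega), Nat.div_eq_of_lt hi, add_zero]
    rw [h2]
    have h3 : (V^[i] f) = (V ^ i) f := by
      rw [FunLike.coe_pow_eq_iterate V i]
    simp only [_root_.id]
    rw [h3, hV, ← pow_mul, ← pow_mul, ← mul_apply_eq_comp, ← mul_apply_eq_comp,
      ← pow_add, ← pow_add]
    congr 2
    ring

lemma aux_erg {Ω : Type*} [MeasurableSpace Ω] (μ : Measure Ω) [IsProbabilityMeasure μ] (T : Ω → Ω)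
    (hT : Ergodic T μ) (f : Ω → ℝ) (hf : MemLp f 2 μ) (l : ℕ) (hl : 1 ≤ l) (η δ : ℝ)
    (hη : 0 < η) (hδ : 0 < δ) :
    ∃ N0 : ℕ, ∀ N ≥ N0, ∀ K : ℕ, 1 ≤ K → ∀ L : ℕ,
      μ {ω | ∫ x, f x ∂μ + η ≤ (K : ℝ)⁻¹ * ∑ k ∈ range K, ((l * N : ℕ) : ℝ)⁻¹ *
        ∑ b ∈ range (l * N), f (T^[k * L + (b * l + b / N)] ω)} ≤ ENNReal.ofReal δ := by
  have hmp : MeasurePreserving T μ μ := hT.toMeasurePreserving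
  let U : Lp ℝ 2 μ →L[ℝ] Lp ℝ 2 μ :=
    (Lp.compMeasurePreservingₗᵢ ℝ T hmp).toContinuousLinearMap
  have hU : ‖U‖ ≤ 1 := LinearIsometry.norm_toContinuousLinearMap_le _
  have hUapp : ∀ g, U g = Lp.compMeasurePreserving T hmp g := fun g => rfl
  have hUnorm : ∀ k : ℕ, ∀ x, ‖(U ^ k) x‖ ≤ ‖x‖ := by
    intro k
    induction k with
    | zero => intro x; simp
    | succ k ih =>
      intro x
      rw [pow_succ]
      refine (ih _).trans ?_
      simpa using U.le_of_opNorm_le hU x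
  set F : Lp ℝ 2 μ := hf.toLp f with hF
  have hUk : ∀ k : ℕ, ((U ^ k) F : Ω → ℝ) =ᵐ[μ] fun ω => f (T^[k] ω) := by
    intro k
    have : (U ^ k) F = Lp.compMeasurePreserving T^[k] (hmp.iterate k) F := by
      rw [← Lp.compMeasurePreserving_iterate, FunLike.coe_pow_eq_iterate]
      rfl
    rw [this, hF, Lp.toLp_compMeasurePreserving]
    exact MemLp.coeFn_toLp _
  obtain ⟨h, hUh, hlim⟩ := aux_hilbert U hU F l hl
  have hconst : ∃ c, (h : Ω → ℝ) =ᵐ[μ] Function.const Ω c := by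
    refine hT.ae_eq_const_of_ae_eq_comp_ae (Lp.aestronglyMeasurable h) ?_
    have := Lp.coeFn_compMeasurePreserving h hmp
    rw [← hUapp, hUh] at this
    exact this.symm
  obtain ⟨c, hc⟩ := hconst
  -- identify the constant
  have hint : ∀ g : Lp ℝ 2 μ, ∫ x, g x ∂μ = inner ℝ (Lp.const 2 μ (1 : ℝ)) g := by
    intro g
    rw [L2.inner_def]
    refine integral_congr_ae ?_
    filter_upwards [Lp.coeFn_const (p := 2) (μ := μ) (1 : ℝ)] with x hx
    rw [hx]; simp
  have hcf : c = ∫ x, f x ∂μ := by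
    have h1 : ∫ x, h x ∂μ = c := by rw [integral_congr_ae hc]; simp
    have h2 : ∀ k, inner ℝ (Lp.const 2 μ (1 : ℝ)) ((U ^ k) F) = ∫ x, f x ∂μ := by
      intro k
      rw [← hint, integral_congr_ae (hUk k)]
      have := (hmp.iterate k)
      have h3 := integral_map (μ := μ) (φ := T^[k]) this.measurable.aemeasurable (f := f)
        (by rw [this.map_eq]; exact hf.aestronglyMeasurable)
      rw [this.map_eq] at h3
      exact h3.symm
    have h3 := (tendsto_const_nhds (x := Lp.const 2 μ (1 : ℝ))).inner (𝕜 := ℝ) hlim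
    rw [← hint, h1] at h3
    refine tendsto_nhds_unique h3 (tendsto_const_nhds.congr' ?_)
    filter_upwards [Filter.eventually_ge_atTop 1] with N hN
    rw [inner_smul_right, inner_sum]
    simp only [h2]
    have : ((l * N : ℕ) : ℝ) ≠ 0 := by
      have : 0 < l * N := Nat.mul_pos hl hN
      positivity
    rw [sum_const, card_range, nsmul_eq_mul, inv_mul_cancel_left₀ this]
  have hUkh : ∀ k, (U ^ k) h = h := by
    intro k
    induction k with
    | zero => simp
    | succ k ih => rw [pow_succ]; simp [hUh, ih]
  have hsm := Metric.tendsto_atTop.1 hlim (Real.sqrt δ * η) (by positivity)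
  obtain ⟨N0, hN0⟩ := hsm
  refine ⟨N0, fun N hN K hK L => ?_⟩
  have hN1 := hN0 N hN
  rw [dist_eq_norm] at hN1
  set A := ((l * N : ℕ) : ℝ)⁻¹ • ∑ b ∈ range (l * N), (U ^ (b * l + b / N)) F with hA
  set G := (K : ℝ)⁻¹ • ∑ k ∈ range K, (U ^ (k * L)) A with hG
  have hK0 : (0 : ℝ) < K := by exact_mod_cast hK
  have hGh : ‖G - h‖ ≤ Real.sqrt δ * η := by
    have : G - h = (K : ℝ)⁻¹ • ∑ k ∈ range K, (U ^ (k * L)) (A - h) := by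
      simp only [map_sub, hUkh]
      rw [sum_sub_distrib, smul_sub, sum_const, card_range, ← Nat.cast_smul_eq_nsmul ℝ, smul_smul,
        inv_mul_cancel₀ hK0.ne', one_smul]
    rw [this, norm_smul, norm_inv, Real.norm_of_nonneg hK0.le]
    have h4 : ‖∑ k ∈ range K, (U ^ (k * L)) (A - h)‖ ≤ K * (Real.sqrt δ * η) := by
      refine (norm_sum_le _ _).trans ?_
      refine (sum_le_sum (fun k _ => (hUnorm (k * L) _).trans hN1.le)).trans ?_
      simp
    calc (K : ℝ)⁻¹ * _ ≤ (K : ℝ)⁻¹ * (K * (Real.sqrt δ * η)) := by gcongr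
      _ = _ := by field_simp
  have hGae : (G : Ω → ℝ) =ᵐ[μ] fun ω => (K : ℝ)⁻¹ * ∑ k ∈ range K, ((l * N : ℕ) : ℝ)⁻¹ *
        ∑ b ∈ range (l * N), f (T^[k * L + (b * l + b / N)] ω) := by
    have e : G = (K : ℝ)⁻¹ • ∑ k ∈ range K, ((l * N : ℕ) : ℝ)⁻¹ •
        ∑ b ∈ range (l * N), (U ^ (k * L + (b * l + b / N))) F := by
      rw [hG, hA]
      simp only [map_smul, map_sum, pow_add, mul_apply_eq_comp]
    rw [e]
    have hall : ∀ᵐ ω ∂μ, ∀ k : ℕ, ((U ^ k) F : Ω → ℝ) ω = f (T^[k] ω) := ae_all_iff.2 hUk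
    have hs1 := fun k : ℕ => Lp.coeFn_fun_finsetSum (range (l * N))
      (fun b => (U ^ (k * L + (b * l + b / N))) F)
    have hs2 := fun k : ℕ => Lp.coeFn_smul (((l * N : ℕ) : ℝ)⁻¹)
      (∑ b ∈ range (l * N), (U ^ (k * L + (b * l + b / N))) F)
    have hs3 := Lp.coeFn_fun_finsetSum (range K) (fun k => ((l * N : ℕ) : ℝ)⁻¹ •
        ∑ b ∈ range (l * N), (U ^ (k * L + (b * l + b / N))) F)
    filter_upwards [Lp.coeFn_smul ((K : ℝ)⁻¹) (∑ k ∈ range K, ((l * N : ℕ) : ℝ)⁻¹ •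
        ∑ b ∈ range (l * N), (U ^ (k * L + (b * l + b / N))) F), hall, ae_all_iff.2 hs1,
        ae_all_iff.2 hs2, hs3] with ω w1 w2 w3 w4 w5
    rw [w1, Pi.smul_apply, w5, smul_eq_mul]
    congr 1
    refine sum_congr rfl fun k _ => ?_
    rw [w4, Pi.smul_apply, w3, smul_eq_mul]
    simp only [w2]
  have hmark := meas_ge_le_mul_pow_eLpNorm_enorm μ (p := 2) (by simp) (by simp)
    (Lp.aestronglyMeasurable (G - h)) (ε := ENNReal.ofReal η) (by simpa using hη) (by simp)
  have hnorm : eLpNorm (G - h : Lp ℝ 2 μ) 2 μ ≤ ENNReal.ofReal (Real.sqrt δ * η) := by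
    rw [← ENNReal.ofReal_toReal (Lp.eLpNorm_ne_top (G - h)), ← Lp.norm_def]
    exact ENNReal.ofReal_le_ofReal hGh
  calc _ ≤ μ {ω | ENNReal.ofReal η ≤ ‖(G - h : Lp ℝ 2 μ) ω‖ₑ} := by
        apply measure_mono_ae
        filter_upwards [hGae, hc, Lp.coeFn_sub G h] with ω w1 w2 w3 w4
        change ENNReal.ofReal η ≤ ‖(G - h : Lp ℝ 2 μ) ω‖ₑ
        rw [w3, Pi.sub_apply, w1, w2, ← ofReal_norm, Real.norm_eq_abs]
        apply ENNReal.ofReal_le_ofReal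
        refine le_trans ?_ (le_abs_self _)
        have w5 : ∫ x, f x ∂μ + η ≤ _ := w4
        rw [Function.const_apply, hcf]
        linarith
    _ ≤ _ := hmark
    _ ≤ (ENNReal.ofReal η)⁻¹ ^ (2 : ℝ) * ENNReal.ofReal (Real.sqrt δ * η) ^ (2 : ℝ) := by
        simp only [ENNReal.toReal_ofNat]
        gcongr
    _ = ENNReal.ofReal δ := by
        rw [← ENNReal.ofReal_inv_of_pos hη, ENNReal.ofReal_rpow_of_nonneg (by positivity) (by norm_num),
          ENNReal.ofReal_rpow_of_nonneg (by positivity) (by norm_num), ← ENNReal.ofReal_mul (by positivity)]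
        congr 1
        rw [Real.rpow_two, Real.rpow_two, mul_pow, Real.sq_sqrt hδ.le]
        field_simp


lemma aux_marg {P : Type*} [Fintype P] [DecidableEq P] {l L : ℕ} (e : Fin l → Fin L)
    (he : Function.Injective e) (w : Fin L → P → ℝ) (hw : ∀ i, ∑ p, w i p = 1)
    (g : (Fin l → P) → ℝ) :
    ∑ p : Fin L → P, (∏ i, w i (p i)) * g (fun t => p (e t)) =
      ∑ q : Fin l → P, (∏ t, w (e t) (q t)) * g q := by
  classical
  rw [← sum_fiberwise_of_maps_to (s := univ) (t := (univ : Finset (Fin l → P)))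
    (g := fun p : Fin L → P => fun t => p (e t)) (fun _ _ => mem_univ _)]
  refine sum_congr rfl fun q _ => ?_
  have h1 : ∀ p ∈ (univ.filter fun p : Fin L → P => (fun t => p (e t)) = q),
      (∏ i, w i (p i)) * g (fun t => p (e t)) = (∏ i, w i (p i)) * g q := by
    intro p hp
    rw [(mem_filter.1 hp).2]
  rw [sum_congr rfl h1, ← sum_mul]
  congr 1
  have h2 : (univ.filter fun p : Fin L → P => (fun t => p (e t)) = q) =
      Fintype.piFinset (fun i : Fin L => univ.filter (fun v => ∀ t, e t = i → v = q t)) := by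
    ext p
    simp only [mem_filter, mem_univ, true_and, Fintype.mem_piFinset]
    constructor
    · rintro rfl i t rfl; rfl
    · intro h; funext t; exact h _ t rfl
  rw [h2, ← prod_univ_sum]
  have h3 : ∏ i ∈ univ.image e, ∑ j with ∀ t, e t = i → j = q t, w i j =
      ∏ i, ∑ j with ∀ t, e t = i → j = q t, w i j := by
    refine prod_subset (subset_univ _) fun i _ hi => ?_
    rw [filter_true_of_mem, hw]
    intro v _ t ht
    exact absurd (mem_image.2 ⟨t, mem_univ _, ht⟩) hi
  rw [← h3, prod_image (fun a _ b _ h => he h)]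
  refine prod_congr rfl fun t _ => ?_
  have : (univ.filter fun j => ∀ t', e t' = e t → j = q t') = {q t} := by
    ext v
    simp only [mem_filter, mem_univ, true_and, mem_singleton]
    constructor
    · intro h; exact h t rfl
    · rintro rfl t' ht'; rw [he ht']
  rw [this, sum_singleton]

/-- Expectation over the memoryless channel. -/
lemma aux_Wjn (W : 𝒳 → (∀ j, 𝒴 j) → (∀ j, 𝒵 j) → ℝ) (j : Fin J) {n : ℕ} (x : Fin n → 𝒳)
    (g : (Fin n → 𝒴 j) → (Fin n → 𝒵 j) → ℝ) :
    ∑ yj : Fin n → 𝒴 j, ∑ zj : Fin n → 𝒵 j, Wjn W j x yj zj * g yj zj =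
    ∑ p : Fin n → ((∀ k, 𝒴 k) × (∀ k, 𝒵 k)), (∏ i, W (x i) (p i).1 (p i).2) *
      g (fun i => (p i).1 j) (fun i => (p i).2 j) := by
  have h0 : ∀ G : (Fin n → ∀ k, 𝒴 k) → (Fin n → ∀ k, 𝒵 k) → ℝ,
      ∑ p : Fin n → ((∀ k, 𝒴 k) × (∀ k, 𝒵 k)), G (fun i => (p i).1) (fun i => (p i).2) =
      ∑ y, ∑ z, G y z := by
    intro G
    rw [← Fintype.sum_prod_type']
    exact Fintype.sum_equiv (Equiv.arrowProdEquivProdArrow _ _ _) _ _ (fun p => rfl)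
  rw [h0 (fun y z => (∏ i, W (x i) (y i) (z i)) * g (fun i => y i j) (fun i => z i j))]
  simp only [Wjn, sum_mul]
  calc _ = ∑ yj : Fin n → 𝒴 j, ∑ y : Fin n → ∀ k, 𝒴 k, ∑ zj : Fin n → 𝒵 j,
        ∑ z : Fin n → ∀ k, 𝒵 k, (if (∀ i, y i j = yj i ∧ z i j = zj i) then Wn W x y z else 0)
          * g yj zj := sum_congr rfl fun yj _ => sum_comm
    _ = ∑ y : Fin n → ∀ k, 𝒴 k, ∑ yj : Fin n → 𝒴 j, ∑ z : Fin n → ∀ k, 𝒵 k,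
        ∑ zj : Fin n → 𝒵 j, (if (∀ i, y i j = yj i ∧ z i j = zj i) then Wn W x y z else 0)
          * g yj zj := by
        rw [sum_comm]
        exact sum_congr rfl fun y _ => sum_congr rfl fun yj _ => sum_comm
    _ = ∑ y : Fin n → ∀ k, 𝒴 k, ∑ z : Fin n → ∀ k, 𝒵 k, ∑ yj : Fin n → 𝒴 j,
        ∑ zj : Fin n → 𝒵 j, (if (∀ i, y i j = yj i ∧ z i j = zj i) then Wn W x y z else 0)
          * g yj zj := sum_congr rfl fun y _ => sum_comm
    _ = _ := by
        refine sum_congr rfl fun y _ => sum_congr rfl fun z _ => ?_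
        rw [sum_eq_single (fun i => y i j), sum_eq_single (fun i => z i j)]
        · simp [Wn]
        · intro zj _ h
          rw [if_neg, zero_mul]
          intro h'; exact h (funext fun i => (h' i).2.symm)
        · simp
        · intro yj _ h
          refine sum_eq_zero fun zj _ => ?_
          rw [if_neg, zero_mul]
          intro h'; exact h (funext fun i => (h' i).1.symm)
        · simp

lemma aux_dbar (W : 𝒳 → (∀ j, 𝒴 j) → (∀ j, 𝒵 j) → ℝ) (d1 : ∀ j, Zt j → 𝒵 j → ℝ) (j : Fin J)
    {n : ℕ} (C : BlockCode J 𝒳 𝒴 Zt n) (x : Fin n → 𝒳) :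
    dbar W d1 C j x = (∑ t, ∑ p : Fin n → ((∀ k, 𝒴 k) × (∀ k, 𝒵 k)),
      (∏ i, W (x i) (p i).1 (p i).2) *
        d1 j (C.dec j (C.enc x) (fun i => (p i).1 j) t) ((p t).2 j)) / n := by
  rw [dbar, aux_Wjn W j x (fun yj zj => dn d1 j (C.dec j (C.enc x) yj) zj)]
  rw [sum_comm, sum_div]
  refine sum_congr rfl fun p _ => ?_
  rw [dn, ← mul_sum, mul_div_assoc]

/-- Use the code `C` in parallel on the disjoint blocks described by `e`. -/
noncomputable def concatCode {l L B : ℕ} (C : BlockCode J 𝒳 𝒴 Zt l) (e : Fin B × Fin l → Fin L)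
    (g : Fin L → Fin B × Fin l) : BlockCode J 𝒳 𝒴 Zt L where
  M := C.M ^ B
  M_pos := pow_pos C.M_pos _
  enc x := finFunctionFinEquiv (fun b => C.enc (fun t => x (e (b, t))))
  dec j m y := fun i => C.dec j (finFunctionFinEquiv.symm m (g i).1)
    (fun t => y (e ((g i).1, t))) (g i).2

lemma aux_concat (W : 𝒳 → (∀ j, 𝒴 j) → (∀ j, 𝒵 j) → ℝ)
    (hW0 : ∀ x y z, 0 ≤ W x y z)
    (hW1 : ∀ x, (∑ y, ∑ z, W x y z) = 1)
    (d1 : ∀ j, Zt j → 𝒵 j → ℝ) (j : Fin J) (D : ℝ)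
    (hdmax : ∀ a b, d1 j a b ≤ D)
    {l L B : ℕ} (hl : 1 ≤ l) (hL : 1 ≤ L) (hBL : B * l ≤ L) (C : BlockCode J 𝒳 𝒴 Zt l)
    (e : Fin B × Fin l → Fin L)
    (g : Fin L → Fin B × Fin l) (hg : ∀ a, g (e a) = a) (x : Fin L → 𝒳) :
    dbar W d1 (concatCode C e g) j x ≤
      (l * ∑ b : Fin B, dbar W d1 C j (fun t => x (e (b, t))) + ((L : ℝ) - B * l) * D) / L := by
  classical
  have he : Function.Injective e := Function.LeftInverse.injective hg
  have hW1' : ∀ x, ∑ p : (∀ k, 𝒴 k) × (∀ k, 𝒵 k), W x p.1 p.2 = 1 := by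
    intro x; rw [Fintype.sum_prod_type]; exact hW1 x
  rw [aux_dbar]
  gcongr
  set E : Fin L → ℝ := fun i => ∑ p : Fin L → ((∀ k, 𝒴 k) × (∀ k, 𝒵 k)),
      (∏ i, W (x i) (p i).1 (p i).2) *
        d1 j ((concatCode C e g).dec j ((concatCode C e g).enc x) (fun i => (p i).1 j) i)
          ((p i).2 j) with hE
  have hsum1 : ∑ p : Fin L → ((∀ k, 𝒴 k) × (∀ k, 𝒵 k)), (∏ i, W (x i) (p i).1 (p i).2) = 1 := by
    have := prod_univ_sum (fun _ : Fin L => (univ : Finset ((∀ k, 𝒴 k) × (∀ k, 𝒵 k))))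
      (fun i p => W (x i) p.1 p.2)
    simp only [hW1', prod_const_one, Fintype.piFinset_univ] at this
    exact this.symm
  have hEle : ∀ i, E i ≤ D := by
    intro i
    calc E i ≤ ∑ p : Fin L → ((∀ k, 𝒴 k) × (∀ k, 𝒵 k)), (∏ i, W (x i) (p i).1 (p i).2) * D := by
          refine sum_le_sum fun p _ => mul_le_mul_of_nonneg_left (hdmax _ _) ?_
          exact prod_nonneg fun i _ => hW0 _ _ _
      _ = D := by rw [← sum_mul, hsum1, one_mul]
  have hEe : ∀ b, ∑ t, E (e (b, t)) = l * dbar W d1 C j (fun t => x (e (b, t))) := by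
    intro b
    have hl0 : (l : ℝ) ≠ 0 := by positivity
    rw [aux_dbar, mul_div_cancel₀ _ hl0]
    refine sum_congr rfl fun t _ => ?_
    rw [hE]
    simp only [concatCode, hg, Equiv.symm_apply_apply]
    exact aux_marg (P := (∀ k, 𝒴 k) × (∀ k, 𝒵 k)) (fun t => e (b, t)) (fun t t' h => by simpa using he h)
      (fun i p => W (x i) p.1 p.2) (fun i => hW1' _)
      (fun q => d1 j (C.dec j (C.enc fun t => x (e (b, t))) (fun t => (q t).1 j) t) ((q t).2 j))
  have hsplit : ∑ i, E i = ∑ i ∈ univ.image e, E i + ∑ i ∈ (univ.image e)ᶜ, E i :=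
    (sum_add_sum_compl _ _).symm
  rw [hsplit]
  refine add_le_add (le_of_eq ?_) ?_
  · rw [sum_image (fun a _ b _ h => he h), Fintype.sum_prod_type, mul_sum]
    exact sum_congr rfl fun b _ => hEe b
  · refine (sum_le_card_nsmul _ _ D fun i _ => hEle i).trans (le_of_eq ?_)
    rw [card_compl, card_image_of_injective _ he, nsmul_eq_mul, card_univ, Fintype.card_prod]
    simp only [Fintype.card_fin]
    rw [Nat.cast_sub hBL]
    push_cast
    rfl

lemma aux_dbar_nonneg (W : 𝒳 → (∀ j, 𝒴 j) → (∀ j, 𝒵 j) → ℝ)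
    (hW0 : ∀ x y z, 0 ≤ W x y z) (d1 : ∀ j, Zt j → 𝒵 j → ℝ) (j : Fin J)
    (hd0 : ∀ a b, 0 ≤ d1 j a b) {l : ℕ} (C : BlockCode J 𝒳 𝒴 Zt l) (x : Fin l → 𝒳) :
    0 ≤ dbar W d1 C j x := by
  rw [aux_dbar]
  refine div_nonneg (sum_nonneg fun t _ => sum_nonneg fun p _ => mul_nonneg ?_ (hd0 _ _))
    (Nat.cast_nonneg _)
  exact prod_nonneg fun i _ => hW0 _ _ _

lemma aux_qEmp {n : ℕ} (L : ℕ) (x : Fin n → 𝒳) (φ : (Fin L → 𝒳) → ℝ) :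
    ∑ a, qEmp L 0 x a * φ a = ((n / L : ℕ) : ℝ)⁻¹ *
      ∑ k ∈ range (n / L), φ (subblock x (k * L) L) := by
  simp only [qEmp, Nat.sub_zero, add_zero]
  rw [← sum_fiberwise_of_maps_to (s := range (n / L)) (t := (univ : Finset (Fin L → 𝒳)))
    (g := fun k => subblock x (k * L) L) (fun _ _ => mem_univ _), mul_sum]
  refine sum_congr rfl fun a _ => ?_
  have h1 : ∀ k ∈ (range (n / L)).filter (fun k => subblock x (k * L) L = a),
      φ (subblock x (k * L) L) = φ a := by
    intro k hk; rw [(mem_filter.1 hk).2]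
  rw [sum_congr rfl h1, sum_const, nsmul_eq_mul, div_eq_inv_mul, mul_assoc]

lemma aux_det (W : 𝒳 → (∀ j, 𝒴 j) → (∀ j, 𝒵 j) → ℝ)
    (hW0 : ∀ x y z, 0 ≤ W x y z)
    (hW1 : ∀ x, (∑ y, ∑ z, W x y z) = 1)
    (d1 : ∀ j, Zt j → 𝒵 j → ℝ) (dmax : Fin J → ℝ)
    (hd0 : ∀ j a b, 0 ≤ d1 j a b)
    (hdmax : ∀ j a b, d1 j a b ≤ dmax j) (ε : ℝ)
    {l N : ℕ} (hl : 1 ≤ l) (hN : 1 ≤ N) (hND : ∀ j, dmax j ≤ ε * N) (hε : 0 < ε)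
    (C : BlockCode J 𝒳 𝒴 Zt l)
    (L : ℕ) (hL : L = l * (N * l + 1)) :
    ∃ C' : BlockCode J 𝒳 𝒴 Zt L, C'.M = C.M ^ (l * N) ∧
      ∀ (n : ℕ) (ω : ℕ → 𝒳) (j : Fin J),
      ∑ a, qEmp L 0 (fun i : Fin n => ω i) a * dbar W d1 C' j a ≤
      ((n / L : ℕ) : ℝ)⁻¹ * ∑ k ∈ range (n / L),
        ((l * N : ℕ) : ℝ)⁻¹ * ∑ b ∈ range (l * N),
          dbar W d1 C j (fun t => ω (k * L + (b * l + b / N) + t)) + ε := by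
  have hLpos : 0 < L := by rw [hL]; positivity
  have hLe : L = l * N * l + l := by rw [hL]; ring
  have hbd : ∀ (b : Fin (l * N)) (t : Fin l), (b : ℕ) * l + b / N + t < L := by
    intro b t
    have h1 : (b : ℕ) / N < l := Nat.div_lt_of_lt_mul (lt_of_lt_of_eq b.2 (mul_comm l N))
    have h2 : ((b : ℕ) + 1) * l ≤ l * N * l := Nat.mul_le_mul_right _ b.2
    have := t.2
    rw [hLe]; nlinarith
  let e : Fin (l * N) × Fin l → Fin L := fun a => ⟨(a.1 : ℕ) * l + a.1 / N + a.2, hbd a.1 a.2⟩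
  have hlt : ∀ (b b' : Fin (l * N)) (t t' : Fin l), b < b' →
      (b : ℕ) * l + b / N + t < (b' : ℕ) * l + b' / N + t' := by
    intro b b' t t' h
    have h1 : (b : ℕ) / N ≤ b' / N := Nat.div_le_div_right (Nat.le_of_lt h)
    have h2 : ((b : ℕ) + 1) * l ≤ b' * l := Nat.mul_le_mul_right _ h
    have := t.2
    nlinarith
  have he : Function.Injective e := by
    rintro ⟨b, t⟩ ⟨b', t'⟩ h
    have h' : (b : ℕ) * l + b / N + t = (b' : ℕ) * l + b' / N + t' := congrArg Fin.val h
    rcases lt_trichotomy b b' with hb | hb | hb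
    · exact absurd h' (hlt _ _ _ _ hb).ne
    · subst hb
      have : (t : ℕ) = t' := by omega
      rw [Fin.ext this]
    · exact absurd h' (hlt _ _ _ _ hb).ne'
  have : Nonempty (Fin (l * N) × Fin l) := ⟨(⟨0, Nat.mul_pos hl hN⟩, ⟨0, hl⟩)⟩
  refine ⟨concatCode C e (Function.invFun e), rfl, fun n ω j => ?_⟩
  rw [aux_qEmp]
  set K := n / L with hK
  by_cases hK0 : K = 0
  · rw [hK0]; simp [hε.le]
  have hKpos : (0 : ℝ) < K := by exact_mod_cast Nat.pos_of_ne_zero hK0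
  have hlR : (1 : ℝ) ≤ l := by exact_mod_cast hl
  have hNR : (1 : ℝ) ≤ N := by exact_mod_cast hN
  have hLR : (L : ℝ) = l * N * l + l := by exact_mod_cast hLe
  have hLR0 : (0 : ℝ) < L := by exact_mod_cast hLpos
  have key : ∀ k ∈ range K, dbar W d1 (concatCode C e (Function.invFun e)) j
      (subblock (fun i : Fin n => ω i) (k * L) L) ≤ ((l * N : ℕ) : ℝ)⁻¹ * ∑ b ∈ range (l * N),
          dbar W d1 C j (fun t => ω (k * L + (b * l + b / N) + t)) + ε := by
    intro k hk
    have hk := mem_range.1 hk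
    have hsub : subblock (fun i : Fin n => ω i) (k * L) L = fun t : Fin L => ω (k * L + t) := by
      funext t
      have h1 : (k + 1) * L ≤ K * L := Nat.mul_le_mul_right _ hk
      have h2 : K * L ≤ n := Nat.div_mul_le_self _ _
      have h3 : k * L + (t : ℕ) < n := by have := t.2; nlinarith
      simp only [subblock, h3, dif_pos]
    rw [hsub]
    refine (aux_concat W hW0 hW1 d1 j (dmax j) (hdmax j) hl hLpos (by omega) C e _
      (Function.leftInverse_invFun he) _).trans ?_
    rw [← Fin.sum_univ_eq_sum_range (fun b => dbar W d1 C j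
      (fun t => ω (k * L + (b * l + b / N) + t)))]
    have hsumeq : ∑ b : Fin (l * N), dbar W d1 C j (fun t => ω (k * L + (e (b, t) : ℕ))) =
        ∑ b : Fin (l * N), dbar W d1 C j
          (fun t => ω (k * L + ((b : ℕ) * l + (b : ℕ) / N) + t)) := by
      refine sum_congr rfl fun b _ => ?_
      simp only [e, add_assoc]
    rw [hsumeq]
    set S := ∑ b : Fin (l * N), dbar W d1 C j
          (fun t => ω (k * L + ((b : ℕ) * l + (b : ℕ) / N) + t)) with hS
    have hS0 : 0 ≤ S := sum_nonneg fun b _ => aux_dbar_nonneg W hW0 d1 j (hd0 j) C _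
    rw [add_div]
    push_cast
    refine add_le_add ?_ ?_
    · rw [inv_mul_eq_div, div_le_div_iff₀ hLR0 (by positivity), hLR]
      nlinarith [mul_nonneg hS0 (by linarith : (0:ℝ) ≤ l)]
    · rw [div_le_iff₀ hLR0, hLR]
      have h5 : (l : ℝ) * N * l + l - l * N * l = l := by ring
      rw [h5]
      have h6 := hND j
      have h7 : (l : ℝ) * dmax j ≤ l * (ε * N) := by gcongr
      have h8 : (0 : ℝ) ≤ ε * l * N * (l - 1) := by
        have : (0 : ℝ) ≤ l - 1 := by linarith
        positivity
      have h9 : (0 : ℝ) ≤ ε * l := by positivity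
      nlinarith
  calc _ ≤ (K : ℝ)⁻¹ * ∑ k ∈ range K, (((l * N : ℕ) : ℝ)⁻¹ * ∑ b ∈ range (l * N),
          dbar W d1 C j (fun t => ω (k * L + (b * l + b / N) + t)) + ε) := by
        gcongr with k hk
        exact key k hk
    _ = _ := by
        rw [sum_add_distrib, mul_add, sum_const, card_range, nsmul_eq_mul,
          inv_mul_cancel_left₀ hKpos.ne']

/-- **Lemma 1.** If `(R, Δ)` is achievable for the stationary ergodic source `μ`, then for all
sufficiently large `n` the probability `P_{X^n}(𝒢_n^∁)` is at most `ε`. -/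
theorem prob_bad_set_small
    [MeasurableSpace 𝒳]
    (W : 𝒳 → (∀ j, 𝒴 j) → (∀ j, 𝒵 j) → ℝ)
    (hW0 : ∀ x y z, 0 ≤ W x y z)
    (hW1 : ∀ x, (∑ y, ∑ z, W x y z) = 1)
    (d1 : ∀ j, Zt j → 𝒵 j → ℝ) (dmax : Fin J → ℝ)
    (hd0 : ∀ j a b, 0 ≤ d1 j a b) (hdmax : ∀ j a b, d1 j a b ≤ dmax j)
    (R : ℝ) (Δ : Fin J → ℝ) (ε : ℝ) (hε : 0 < ε)
    (μ : Measure (ℕ → 𝒳)) (hprob : IsProbabilityMeasure μ)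
    (herg : Ergodic (fun ω k => ω (k + 1)) μ)
    (hach : Achievable μ W d1 R Δ) :
    ∃ N : ℕ, ∀ n ≥ N,
      (μ {ω | (fun i : Fin n => ω (i : ℕ)) ∉
          GoodSet (𝒴 := 𝒴) W d1 R Δ ε n}).toReal ≤ ε := by
  classical
  obtain ⟨N1, hN1⟩ := hach (ε / 2) (by positivity)
  obtain ⟨l, hl1, hl⟩ : ∃ l, N1 ≤ l ∧ 1 ≤ l := ⟨max N1 1, le_max_left _ _, le_max_right _ _⟩
  obtain ⟨C, hCR, hCD⟩ := hN1 l hl1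
  have hlR : (1 : ℝ) ≤ l := by exact_mod_cast hl
  have hlR0 : (0 : ℝ) < l := by linarith
  have hM1 : (1 : ℝ) ≤ C.M := by exact_mod_cast C.M_pos
  have hlog0 : 0 ≤ Real.logb 2 C.M := Real.logb_nonneg (by norm_num) hM1
  have hR0 : 0 ≤ R + ε := by
    have : 0 ≤ Real.logb 2 C.M / l := by positivity
    linarith
  have hMle : (C.M : ℝ) ≤ (2 : ℝ) ^ ((l : ℝ) * (R + ε)) := by
    rw [← Real.logb_le_iff_le_rpow (by norm_num) (by linarith)]
    rw [div_le_iff₀ hlR0] at hCR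
    nlinarith
  -- the dominating measurable functions
  set cyl : (Fin l → 𝒳) → Set (ℕ → 𝒳) := fun x => {ω | ∀ i : Fin l, ω (i : ℕ) = x i} with hcyl
  set f : Fin J → (ℕ → 𝒳) → ℝ := fun j ω => ∑ x : Fin l → 𝒳,
    (toMeasurable μ (cyl x)).indicator (fun _ => dbar W d1 C j x) ω with hf
  have hind : ∀ j x, MemLp ((toMeasurable μ (cyl x)).indicator
      (fun _ : ℕ → 𝒳 => dbar W d1 C j x)) 2 μ := fun j x =>
    memLp_indicator_const 2 (measurableSet_toMeasurable _ _) _ (Or.inr (measure_ne_top _ _))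
  have hfL : ∀ j, MemLp (f j) 2 μ := fun j => memLp_finsetSum _ fun x _ => hind j x
  have hfint : ∀ j, ∫ ω, f j ω ∂μ = expDist μ W d1 C j := by
    intro j
    rw [hf, expDist]
    simp only
    rw [integral_finsetSum _ fun x _ => (hind j x).integrable (by norm_num)]
    refine sum_congr rfl fun x _ => ?_
    rw [integral_indicator_const _ (measurableSet_toMeasurable _ _), Measure.real,
      measure_toMeasurable, smul_eq_mul]
  have hfdom : ∀ j ω, dbar W d1 C j (fun t => ω t) ≤ f j ω := by
    intro j ω
    have h1 := single_le_sum (f := fun x : Fin l → 𝒳 =>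
      (toMeasurable μ (cyl x)).indicator (fun _ => dbar W d1 C j x) ω)
      (fun x _ => Set.indicator_nonneg (fun _ _ => aux_dbar_nonneg W hW0 d1 j (hd0 j) C x) ω)
      (mem_univ (fun t : Fin l => ω t))
    refine le_trans (le_of_eq ?_) h1
    rw [Set.indicator_of_mem]
    exact subset_toMeasurable _ _ (fun i => rfl)
  have hTit : ∀ (m : ℕ) (ω : ℕ → 𝒳),
      (fun (ω : ℕ → 𝒳) k => ω (k + 1))^[m] ω = fun k => ω (m + k) := by
    intro m
    induction m with
    | zero => intro ω; simp
    | succ m ih =>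
      intro ω
      rw [Function.iterate_succ_apply, ih]
      funext k
      congr 1
      omega
  have hδ : 0 < ε / (J + 1) := by positivity
  choose N0 hN0 using fun j => aux_erg μ _ herg (f j) (hfL j) l hl (ε / 2) (ε / (J + 1))
    (by positivity) hδ
  obtain ⟨N, hNpos, hNN, hND⟩ : ∃ N : ℕ, 1 ≤ N ∧ (∀ j, N0 j ≤ N) ∧ ∀ j, dmax j ≤ ε * N := by
    refine ⟨1 + ∑ j, N0 j + ∑ j, ⌈dmax j / ε⌉₊, by omega, fun j => ?_, fun j => ?_⟩
    · have := single_le_sum (f := N0) (fun _ _ => Nat.zero_le _) (mem_univ j)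
      omega
    · have := single_le_sum (f := fun j => ⌈dmax j / ε⌉₊) (fun _ _ => Nat.zero_le _) (mem_univ j)
      have h2 := Nat.le_ceil (dmax j / ε)
      rw [← div_le_iff₀' hε]
      refine h2.trans ?_
      exact_mod_cast (by omega)
  obtain ⟨L, hL⟩ : ∃ L, L = l * (N * l + 1) := ⟨_, rfl⟩
  obtain ⟨C', hC'M, hC'⟩ := aux_det W hW0 hW1 d1 dmax hd0 hdmax ε hl hNpos hND hε C L hL
  have hLpos : 1 ≤ L := hL ▸ Nat.mul_pos hl (Nat.succ_pos _)
  have hev : ∀ᶠ n : ℕ in Filter.atTop, (L : ℝ) ≤ Real.logb 2 (Real.logb 2 n) ∧ L ≤ n := by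
    have h1 : Filter.Tendsto (fun n : ℕ => Real.logb 2 (Real.logb 2 n)) Filter.atTop
        Filter.atTop :=
      (Real.tendsto_logb_atTop (by norm_num)).comp
        ((Real.tendsto_logb_atTop (by norm_num)).comp tendsto_natCast_atTop_atTop)
    exact (h1.eventually_ge_atTop _).and (Filter.eventually_ge_atTop L)
  obtain ⟨n0, hn0⟩ := Filter.eventually_atTop.1 hev
  refine ⟨n0, fun n hn => ?_⟩
  obtain ⟨hLlog, hLn⟩ := hn0 n hn
  have hK : 1 ≤ n / L := Nat.div_pos hLn hLpos
  have hsub : {ω : ℕ → 𝒳 | (fun i : Fin n => ω (i : ℕ)) ∉ GoodSet (𝒴 := 𝒴) W d1 R Δ ε n} ⊆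
      ⋃ j : Fin J, {ω | ∫ x, f j x ∂μ + ε / 2 ≤ ((n / L : ℕ) : ℝ)⁻¹ * ∑ k ∈ range (n / L),
        ((l * N : ℕ) : ℝ)⁻¹ * ∑ b ∈ range (l * N),
          f j ((fun (ω : ℕ → 𝒳) k => ω (k + 1))^[k * L + (b * l + b / N)] ω)} := by
    intro ω hω
    by_contra hcon
    apply hω
    simp only [Set.mem_iUnion, Set.mem_ofPred_eq, not_exists, not_le] at hcon
    refine ⟨L, hLpos, hLlog, C', ?_, 0, hLpos, fun j => ?_⟩
    · rw [hC'M]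
      push_cast
      calc (C.M : ℝ) ^ (l * N) ≤ ((2 : ℝ) ^ ((l : ℝ) * (R + ε))) ^ (l * N) := by gcongr
        _ = (2 : ℝ) ^ ((l : ℝ) * (R + ε) * (l * N : ℕ)) := by
          rw [← Real.rpow_natCast, ← Real.rpow_mul (by norm_num)]
        _ ≤ _ := by
          apply Real.rpow_le_rpow_of_exponent_le (by norm_num)
          rw [hL]
          push_cast
          nlinarith [mul_nonneg hlR0.le hR0]
    · refine (hC' n ω j).trans ?_
      have hJ : (1 : ℝ) ≤ J := by exact_mod_cast (Nat.lt_of_le_of_lt (Nat.zero_le _) j.2)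
      have h1 := hcon j
      rw [hfint] at h1
      have h2 := hCD j
      have h3 : ((n / L : ℕ) : ℝ)⁻¹ * ∑ k ∈ range (n / L),
        ((l * N : ℕ) : ℝ)⁻¹ * ∑ b ∈ range (l * N),
          dbar W d1 C j (fun t => ω (k * L + (b * l + b / N) + t)) ≤
          ((n / L : ℕ) : ℝ)⁻¹ * ∑ k ∈ range (n / L),
        ((l * N : ℕ) : ℝ)⁻¹ * ∑ b ∈ range (l * N),
          f j ((fun (ω : ℕ → 𝒳) k => ω (k + 1))^[k * L + (b * l + b / N)] ω) := by
        gcongr with k hk b hb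
        rw [hTit]
        exact hfdom j (fun i => ω (k * L + (b * l + b / N) + i))
      nlinarith
  have hμ : μ {ω : ℕ → 𝒳 | (fun i : Fin n => ω (i : ℕ)) ∉ GoodSet (𝒴 := 𝒴) W d1 R Δ ε n} ≤
      ENNReal.ofReal ε := by
    refine (measure_mono hsub).trans ((measure_iUnion_fintype_le _ _).trans ?_)
    refine (sum_le_sum fun j _ => hN0 j N (hNN j) (n / L) hK L).trans ?_
    rw [sum_const, card_univ, Fintype.card_fin, nsmul_eq_mul, ← ENNReal.ofReal_natCast,
      ← ENNReal.ofReal_mul (by positivity)]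
    apply ENNReal.ofReal_le_ofReal
    rw [← mul_div_assoc, div_le_iff₀ (by positivity)]
    nlinarith
  exact ENNReal.toReal_le_of_le_ofReal hε.le hμ

end Lemma1
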